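/- There exists a constant C > 0 such that for all real B ≥ 3, the number of quadruples (a₀,a₁,a₂,a₃) of positive integers, each at most B, for which there exist positive integers r₀,r₁,r₂,r₃ and b₀,b₁,b₂,b₃, squarefree positive integers u₀₁,u₀₂,u₀₃,u₁₂,u₁₃,u₂₃, and squarefree positive integers v_{ij} for all ordered pairs (i,j) with i ≠ j in {0,1,2,3}, satisfying: a₀ = r₀·b₀³·u₀₁·u₀₂·u₀₃·v₀₁·v₁₀²·v₀₂·v₂₀²·v₀₃·v₃₀², a₁ = r₁·b₁³·u₀₁·u₁₂·u₁₃·v₁₀·v₀₁²·v₁₂·v₂₁²·v₁₃·v₃₁², a₂ = r₂·b₂³·u₀₂·u₁₂·u₂₃·v₂₀·v₀₂²·v₂₁·v₁₂²·v₂₃·v₃₂², a₃ = r₃·b₃³·u₀₃·u₁₃·u₂₃·v₃₀·v₀₃²·v₃₁·v₁₃²·v₃₂·v₂₃², every prime dividing r₀ equals 3, and every prime dividing r₁, r₂ or r₃ is less than 17, is at most C·B²·(log B)². -/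

import Mathlib

open Finset in
lemma aux_geom_range (m : ℕ) : ∑ k ∈ range (m+1), (Real.sqrt 2)^k ≤ 4 * (Real.sqrt 2)^m := by
  have hq : (4:ℝ)/3 ≤ Real.sqrt 2 := by
    apply Real.le_sqrt_of_sq_le; norm_num
  induction m with
  | zero => simp
  | succ m ih =>
    rw [sum_range_succ]
    have : 0 ≤ (Real.sqrt 2)^m := by positivity
    rw [pow_succ]
    nlinarith

open Finset in
lemma aux_geom (s : Finset ℕ) (X : ℝ) (h : ∀ k ∈ s, (2:ℝ)^k ≤ X) :
    ∑ k ∈ s, (Real.sqrt 2)^k ≤ 4 * Real.sqrt X := by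
  rcases s.eq_empty_or_nonempty with rfl | hs
  · simp
  · have h1 : s ⊆ range (s.max' hs + 1) := by
      intro k hk
      have := s.le_max' k hk
      simp; omega
    have h2 := h _ (s.max'_mem hs)
    calc ∑ k ∈ s, (Real.sqrt 2)^k ≤ ∑ k ∈ range (s.max' hs + 1), (Real.sqrt 2)^k :=
          sum_le_sum_of_subset_of_nonneg h1 (fun _ _ _ => by positivity)
      _ ≤ 4 * (Real.sqrt 2)^(s.max' hs) := aux_geom_range _
      _ ≤ 4 * Real.sqrt X := by
          gcongr
          apply Real.le_sqrt_of_sq_le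
          rw [← pow_mul, mul_comm, pow_mul, Real.sq_sqrt (by norm_num)]
          exact h2

abbrev Six := ℕ × ℕ × ℕ × ℕ × ℕ × ℕ

/-- the dyadic data of a tuple `(u01,u02,u03,u12,u13,u23)` -/
def dyad (u : Six) : Six :=
  (Nat.log 2 u.1 + Nat.log 2 u.2.1 + Nat.log 2 u.2.2.1,
   Nat.log 2 u.1 + Nat.log 2 u.2.2.2.1 + Nat.log 2 u.2.2.2.2.1,
   Nat.log 2 u.2.1 + Nat.log 2 u.2.2.2.1 + Nat.log 2 u.2.2.2.2.2,
   Nat.log 2 u.2.2.1 + Nat.log 2 u.2.2.2.2.1 + Nat.log 2 u.2.2.2.2.2,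
   Nat.log 2 u.1, Nat.log 2 u.2.1)

lemma aux_mem_Ico (u k : ℕ) (hu : 0 < u) (h : Nat.log 2 u = k) :
    u ∈ Finset.Ico (2^k) (2^(k+1)) := by
  subst h
  rw [Finset.mem_Ico]
  exact ⟨Nat.pow_log_le_self 2 hu.ne', Nat.lt_pow_succ_log_self (by norm_num) u⟩

open Finset in
lemma aux_fiber (S : Finset Six)
    (hS : ∀ u ∈ S, 0 < u.1 ∧ 0 < u.2.1 ∧ 0 < u.2.2.1 ∧ 0 < u.2.2.2.1 ∧ 0 < u.2.2.2.2.1 ∧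
      0 < u.2.2.2.2.2) (y : Six) :
    ((S.filter (fun u => dyad u = y)).card : ℝ) ≤
      (Real.sqrt 2)^y.1 * (Real.sqrt 2)^y.2.1 * (Real.sqrt 2)^y.2.2.1 * (Real.sqrt 2)^y.2.2.2.1 := by
  rcases (S.filter (fun u => dyad u = y)).eq_empty_or_nonempty with h | ⟨w, hw⟩
  · rw [h]; simp only [card_empty, Nat.cast_zero]; positivity
  · rw [mem_filter] at hw
    obtain ⟨_, rfl⟩ := hw
    obtain ⟨w1, w2, w3, w4, w5, w6⟩ := w
    have hsub : S.filter (fun u => dyad u = dyad (w1, w2, w3, w4, w5, w6)) ⊆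
        Ico (2^Nat.log 2 w1) (2^(Nat.log 2 w1+1)) ×ˢ Ico (2^Nat.log 2 w2) (2^(Nat.log 2 w2+1)) ×ˢ
        Ico (2^Nat.log 2 w3) (2^(Nat.log 2 w3+1)) ×ˢ Ico (2^Nat.log 2 w4) (2^(Nat.log 2 w4+1)) ×ˢ
        Ico (2^Nat.log 2 w5) (2^(Nat.log 2 w5+1)) ×ˢ
        Ico (2^Nat.log 2 w6) (2^(Nat.log 2 w6+1)) := by
      rintro ⟨u1, u2, u3, u4, u5, u6⟩ hu
      rw [mem_filter] at hu
      obtain ⟨hu, he⟩ := hu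
      obtain ⟨p1, p2, p3, p4, p5, p6⟩ := hS _ hu
      simp only [dyad, Prod.mk.injEq] at he p1 p2 p3 p4 p5 p6
      obtain ⟨e1, e2, e3, e4, e5, e6⟩ := he
      simp only [mem_product]
      refine ⟨aux_mem_Ico _ _ p1 ?_, aux_mem_Ico _ _ p2 ?_, aux_mem_Ico _ _ p3 ?_,
        aux_mem_Ico _ _ p4 ?_, aux_mem_Ico _ _ p5 ?_, aux_mem_Ico _ _ p6 ?_⟩ <;> omega
    have hI : ∀ k : ℕ, (2^(k+1) - 2^k : ℕ) = 2^k := by intro k; rw [pow_succ]; omega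
    have hc := card_le_card hsub
    simp only [card_product, Nat.card_Ico, hI] at hc
    have hc' : ((S.filter (fun u => dyad u = dyad (w1, w2, w3, w4, w5, w6))).card : ℝ) ≤ _ :=
      Nat.cast_le.mpr hc
    refine hc'.trans (le_of_eq ?_)
    have h2 : (2:ℝ) = Real.sqrt 2 ^ 2 := (Real.sq_sqrt (by norm_num)).symm
    push_cast
    simp only [dyad]
    generalize Real.sqrt 2 = q at *
    rw [h2]
    ring

open Finset in
lemma aux_count (N : ℕ) (S : Finset Six) (X0 X1 X2 X3 : ℝ)
    (hS : ∀ u ∈ S, 0 < u.1 ∧ 0 < u.2.1 ∧ 0 < u.2.2.1 ∧ 0 < u.2.2.2.1 ∧ 0 < u.2.2.2.2.1 ∧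
      0 < u.2.2.2.2.2)
    (hN : ∀ u ∈ S, u.1 ≤ N ∧ u.2.1 ≤ N)
    (h0 : ∀ u ∈ S, ((u.1 * u.2.1 * u.2.2.1 : ℕ) : ℝ) ≤ X0)
    (h1 : ∀ u ∈ S, ((u.1 * u.2.2.2.1 * u.2.2.2.2.1 : ℕ) : ℝ) ≤ X1)
    (h2 : ∀ u ∈ S, ((u.2.1 * u.2.2.2.1 * u.2.2.2.2.2 : ℕ) : ℝ) ≤ X2)
    (h3 : ∀ u ∈ S, ((u.2.2.1 * u.2.2.2.2.1 * u.2.2.2.2.2 : ℕ) : ℝ) ≤ X3) :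
    (S.card : ℝ) ≤ 256 * (Real.sqrt X0 * Real.sqrt X1 * Real.sqrt X2 * Real.sqrt X3) *
      ((Nat.log 2 N : ℝ) + 1)^2 := by
  set A := S.image (fun u => (dyad u).1)
  set A1 := S.image (fun u => (dyad u).2.1)
  set A2 := S.image (fun u => (dyad u).2.2.1)
  set A3 := S.image (fun u => (dyad u).2.2.2.1)
  set R := range (Nat.log 2 N + 1)
  have key : ∀ a b c : ℕ, 0 < a → 0 < b → 0 < c →
      (2:ℝ)^(Nat.log 2 a + Nat.log 2 b + Nat.log 2 c) ≤ ((a*b*c : ℕ) : ℝ) := by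
    intro a b c ha hb hc
    have : 2^(Nat.log 2 a + Nat.log 2 b + Nat.log 2 c) ≤ a * b * c := by
      rw [pow_add, pow_add]
      exact Nat.mul_le_mul (Nat.mul_le_mul (Nat.pow_log_le_self 2 ha.ne')
        (Nat.pow_log_le_self 2 hb.ne')) (Nat.pow_log_le_self 2 hc.ne')
    exact_mod_cast this
  have g0 : ∑ k ∈ A, (Real.sqrt 2)^k ≤ 4 * Real.sqrt X0 := by
    apply aux_geom
    simp only [A, mem_image]
    rintro k ⟨u, hu, rfl⟩
    obtain ⟨p1, p2, p3, p4, p5, p6⟩ := hS u hu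
    exact (key _ _ _ p1 p2 p3).trans (h0 u hu)
  have g1 : ∑ k ∈ A1, (Real.sqrt 2)^k ≤ 4 * Real.sqrt X1 := by
    apply aux_geom
    simp only [A1, mem_image]
    rintro k ⟨u, hu, rfl⟩
    obtain ⟨p1, p2, p3, p4, p5, p6⟩ := hS u hu
    exact (key _ _ _ p1 p4 p5).trans (h1 u hu)
  have g2 : ∑ k ∈ A2, (Real.sqrt 2)^k ≤ 4 * Real.sqrt X2 := by
    apply aux_geom
    simp only [A2, mem_image]
    rintro k ⟨u, hu, rfl⟩
    obtain ⟨p1, p2, p3, p4, p5, p6⟩ := hS u hu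
    exact (key _ _ _ p2 p4 p6).trans (h2 u hu)
  have g3 : ∑ k ∈ A3, (Real.sqrt 2)^k ≤ 4 * Real.sqrt X3 := by
    apply aux_geom
    simp only [A3, mem_image]
    rintro k ⟨u, hu, rfl⟩
    obtain ⟨p1, p2, p3, p4, p5, p6⟩ := hS u hu
    exact (key _ _ _ p3 p5 p6).trans (h3 u hu)
  have hmap : ∀ u ∈ S, dyad u ∈ A ×ˢ A1 ×ˢ A2 ×ˢ A3 ×ˢ R ×ˢ R := by
    intro u hu
    simp only [mem_product]
    refine ⟨mem_image_of_mem _ hu, mem_image_of_mem _ hu, mem_image_of_mem _ hu,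
      mem_image_of_mem _ hu, ?_, ?_⟩
    · simp only [R, mem_range, dyad]
      exact Nat.lt_succ_of_le (Nat.log_mono_right (hN u hu).1)
    · simp only [R, mem_range, dyad]
      exact Nat.lt_succ_of_le (Nat.log_mono_right (hN u hu).2)
  rw [card_eq_sum_card_fiberwise hmap]
  push_cast
  calc _ ≤ ∑ y ∈ A ×ˢ A1 ×ˢ A2 ×ˢ A3 ×ˢ R ×ˢ R, (Real.sqrt 2)^y.1 * (Real.sqrt 2)^y.2.1 *
          (Real.sqrt 2)^y.2.2.1 * (Real.sqrt 2)^y.2.2.2.1 :=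
        sum_le_sum (fun y _ => aux_fiber S hS y)
    _ = (∑ k ∈ A, (Real.sqrt 2)^k) * (∑ k ∈ A1, (Real.sqrt 2)^k) * (∑ k ∈ A2, (Real.sqrt 2)^k) *
          (∑ k ∈ A3, (Real.sqrt 2)^k) * ((Nat.log 2 N : ℝ) + 1)^2 := by
        simp only [sum_product, sum_const, R, card_product, card_range, nsmul_eq_mul, ← mul_sum, ← sum_mul]
        push_cast
        ring
    _ ≤ (4 * Real.sqrt X0) * (4 * Real.sqrt X1) * (4 * Real.sqrt X2) * (4 * Real.sqrt X3) *
          ((Nat.log 2 N : ℝ) + 1)^2 := by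
        gcongr
    _ = _ := by ring

noncomputable def ff (e n : ℕ) : ℝ := (Real.sqrt ((n:ℝ)^e))⁻¹

lemma ff_nonneg (e n : ℕ) : 0 ≤ ff e n := by unfold ff; positivity

noncomputable def ffhom : ℕ →*₀ ℝ where
  toFun := ff 1
  map_zero' := by simp [ff]
  map_one' := by simp [ff]
  map_mul' := by intro a b; simp [ff, mul_comm]

lemma summable_smooth : Summable (fun n : Nat.smoothNumbers 17 => ff 1 n) := by
  have h : ∀ {p : ℕ}, p.Prime → ‖ffhom p‖ < 1 := by
    intro p hp
    have : (1:ℝ) < p := by exact_mod_cast hp.one_lt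
    have h2 : 1 < Real.sqrt p := by
      rw [Real.lt_sqrt (by norm_num)]; simpa using this
    show ‖ff 1 p‖ < 1
    rw [Real.norm_of_nonneg (ff_nonneg _ _)]
    simp only [ff, pow_one]
    exact inv_lt_one_of_one_lt₀ h2
  have := (EulerProduct.summable_and_hasSum_smoothNumbers_prod_primesBelow_geometric
    (F := ℝ) (f := (ffhom : ℕ →*₀ ℝ).toMonoidHom) (fun {p} hp => h hp) 17).1
  refine this.congr ?_
  intro n
  exact Real.norm_of_nonneg (ff_nonneg _ _)

lemma summable_three : Summable (fun n : ℕ => ff 3 n) := by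
  have := (Real.summable_nat_rpow_inv (p := 3/2)).2 (by norm_num)
  refine this.congr ?_
  intro n
  simp only [ff]
  rw [Real.sqrt_eq_rpow, ← Real.rpow_natCast, ← Real.rpow_mul (by positivity)]
  norm_num

def ee (i : Fin 20) : ℕ := if i.1 < 4 then 1 else 3

open Finset Classical in
noncomputable def TT (N : ℕ) (i : Fin 20) : Finset ℕ :=
  if i.1 < 4 then (Icc 1 N).filter (· ∈ Nat.smoothNumbers 17) else Icc 1 N

open Finset in
lemma sum_bound : ∃ M : ℝ, 0 < M ∧ ∀ (N : ℕ) (i : Fin 20), ∑ n ∈ TT N i, ff (ee i) n ≤ M := by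
  classical
  refine ⟨1 + ∑' n : Nat.smoothNumbers 17, ff 1 n + ∑' n, ff 3 n, ?_, ?_⟩
  · have := tsum_nonneg (L := SummationFilter.unconditional _) (g := fun n : Nat.smoothNumbers 17 => ff 1 n) (fun n => ff_nonneg _ _)
    have := tsum_nonneg (L := SummationFilter.unconditional _) (g := fun n : ℕ => ff 3 n) (fun n => ff_nonneg _ _)
    linarith
  · intro N i
    have t1 := tsum_nonneg (L := SummationFilter.unconditional _) (g := fun n : Nat.smoothNumbers 17 => ff 1 n) (fun n => ff_nonneg _ _)
    have t2 := tsum_nonneg (L := SummationFilter.unconditional _) (g := fun n : ℕ => ff 3 n) (fun n => ff_nonneg _ _)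
    unfold TT ee
    split_ifs with h
    · have : ∑ n ∈ (Icc 1 N).filter (· ∈ Nat.smoothNumbers 17), ff 1 n
          = ∑ n ∈ (Icc 1 N).subtype (· ∈ Nat.smoothNumbers 17), ff 1 (n : ℕ) := by
        rw [sum_subtype_eq_sum_filter]
      have h3 := summable_smooth.sum_le_tsum ((Icc 1 N).subtype (· ∈ Nat.smoothNumbers 17))
        (fun n _ => ff_nonneg _ _)
      have h4 : ∑ n ∈ (Icc 1 N).filter (· ∈ Nat.smoothNumbers 17), ff 1 n ≤ _ := this.trans_le h3
      refine le_trans (le_of_eq ?_) (h4.trans (by linarith))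
      congr!
    · have h3 := summable_three.sum_le_tsum (Icc 1 N) (fun n _ => ff_nonneg _ _)
      linarith

def cc0 (w : Fin 20 → ℕ) : ℕ := w 0 * w 4 ^ 3 * w 8 * w 9 ^ 2 * w 10 * w 11 ^ 2 * w 12 * w 13 ^ 2
def cc1 (w : Fin 20 → ℕ) : ℕ := w 1 * w 5 ^ 3 * w 9 * w 8 ^ 2 * w 14 * w 15 ^ 2 * w 16 * w 17 ^ 2
def cc2 (w : Fin 20 → ℕ) : ℕ := w 2 * w 6 ^ 3 * w 11 * w 10 ^ 2 * w 15 * w 14 ^ 2 * w 18 * w 19 ^ 2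
def cc3 (w : Fin 20 → ℕ) : ℕ := w 3 * w 7 ^ 3 * w 13 * w 12 ^ 2 * w 17 * w 16 ^ 2 * w 19 * w 18 ^ 2

lemma cc_prod (w : Fin 20 → ℕ) : cc0 w * cc1 w * cc2 w * cc3 w = ∏ i, w i ^ ee i := by
  simp only [Fin.prod_univ_succ, Fin.prod_univ_zero]
  show _ = (w 0 ^ 1 * (w 1 ^ 1 * (w 2 ^ 1 * (w 3 ^ 1 * (w 4 ^ 3 * (w 5 ^ 3 * (w 6 ^ 3 * (w 7 ^ 3 * (w 8 ^ 3 * (w 9 ^ 3 *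
  (w 10 ^ 3 * (w 11 ^ 3 * (w 12 ^ 3 * (w 13 ^ 3 * (w 14 ^ 3 * (w 15 ^ 3 * (w 16 ^ 3 * (w 17 ^ 3 * (w 18 ^ 3 * (w 19 ^ 3 * 1))))))))))))))))))))
  simp only [cc0, cc1, cc2, cc3]
  ring

lemma sqrt_prod_eq (B : ℝ) (hB : 0 ≤ B) (w : Fin 20 → ℕ) :
    Real.sqrt (B / cc0 w) * Real.sqrt (B / cc1 w) * Real.sqrt (B / cc2 w) * Real.sqrt (B / cc3 w)
      = B^2 * ∏ i, ff (ee i) (w i) := by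
  have h : ∏ i, ff (ee i) (w i) = (Real.sqrt ((cc0 w * cc1 w * cc2 w * cc3 w : ℕ) : ℝ))⁻¹ := by
    rw [cc_prod]
    push_cast
    simp only [ff]
    rw [Finset.prod_inv_distrib, Real.sqrt_prod]
    intro i _; positivity
  rw [h, ← Real.sqrt_mul (by positivity), ← Real.sqrt_mul (by positivity),
    ← Real.sqrt_mul (by positivity)]
  have : B / cc0 w * (B / cc1 w) * (B / cc2 w) * (B / cc3 w) =
      (B^2)^2 / ((cc0 w * cc1 w * cc2 w * cc3 w : ℕ) : ℝ) := by
    push_cast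
    simp only [div_eq_mul_inv, mul_inv]
    ring
  rw [this, Real.sqrt_div (by positivity), Real.sqrt_sq (by positivity), div_eq_mul_inv]

open Finset in
def UU (N : ℕ) (w : Fin 20 → ℕ) : Finset Six :=
  (Icc 1 N ×ˢ Icc 1 N ×ˢ Icc 1 N ×ˢ Icc 1 N ×ˢ Icc 1 N ×ˢ Icc 1 N).filter (fun u =>
    cc0 w * (u.1 * u.2.1 * u.2.2.1) ≤ N ∧
    cc1 w * (u.1 * u.2.2.2.1 * u.2.2.2.2.1) ≤ N ∧
    cc2 w * (u.2.1 * u.2.2.2.1 * u.2.2.2.2.2) ≤ N ∧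
    cc3 w * (u.2.2.1 * u.2.2.2.2.1 * u.2.2.2.2.2) ≤ N)

def gg (w : Fin 20 → ℕ) (u : Six) : ℕ × ℕ × ℕ × ℕ :=
  (cc0 w * (u.1 * u.2.1 * u.2.2.1),
    cc1 w * (u.1 * u.2.2.2.1 * u.2.2.2.2.1),
    cc2 w * (u.2.1 * u.2.2.2.1 * u.2.2.2.2.2),
    cc3 w * (u.2.2.1 * u.2.2.2.2.1 * u.2.2.2.2.2))

open Finset in
lemma UU_card (B : ℝ) (N : ℕ) (hB : 0 ≤ B) (hNB : (N:ℝ) ≤ B) (w : Fin 20 → ℕ)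
    (hw : ∀ i, 0 < w i) :
    ((UU N w).card : ℝ) ≤ 256 * (B^2 * ∏ i, ff (ee i) (w i)) * ((Nat.log 2 N : ℝ) + 1)^2 := by
  rw [← sqrt_prod_eq B hB w]
  have q : ∀ c m : ℕ, 0 < c → c * m ≤ N → (m:ℝ) ≤ B / c := by
    intro c m hc h
    rw [le_div_iff₀ (by exact_mod_cast hc)]
    refine le_trans ?_ hNB
    rw [mul_comm]
    exact_mod_cast h
  have c0 : 0 < cc0 w := by
    unfold cc0; have := hw; simp [this, Nat.pos_iff_ne_zero, (this _).ne']
  have c1 : 0 < cc1 w := by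
    unfold cc1; have := hw; simp [this, Nat.pos_iff_ne_zero, (this _).ne']
  have c2 : 0 < cc2 w := by
    unfold cc2; have := hw; simp [this, Nat.pos_iff_ne_zero, (this _).ne']
  have c3 : 0 < cc3 w := by
    unfold cc3; have := hw; simp [this, Nat.pos_iff_ne_zero, (this _).ne']
  apply aux_count
  · intro u hu
    simp only [UU, mem_filter, mem_product, mem_Icc] at hu
    omega
  · intro u hu
    simp only [UU, mem_filter, mem_product, mem_Icc] at hu
    omega
  · intro u hu
    exact q _ _ c0 (mem_filter.1 hu).2.1
  · intro u hu
    exact q _ _ c1 (mem_filter.1 hu).2.2.1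
  · intro u hu
    exact q _ _ c2 (mem_filter.1 hu).2.2.2.1
  · intro u hu
    exact q _ _ c3 (mem_filter.1 hu).2.2.2.2

lemma log_bound (B : ℝ) (hB : 3 ≤ B) : (Nat.log 2 ⌊B⌋₊ : ℝ) + 1 ≤ 3 * Real.log B := by
  have h1 : 1 ≤ Real.log B := by
    rw [Real.le_log_iff_exp_le (by linarith)]
    linarith [Real.exp_one_lt_d9]
  have h2 : (2:ℝ)^(Nat.log 2 ⌊B⌋₊) ≤ B := by
    have : 2^(Nat.log 2 ⌊B⌋₊) ≤ ⌊B⌋₊ := Nat.pow_log_le_self 2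
      (by have := Nat.le_floor (n := 3) (a := B) (by exact_mod_cast hB); omega)
    calc (2:ℝ)^(Nat.log 2 ⌊B⌋₊) ≤ (⌊B⌋₊ : ℝ) := by exact_mod_cast this
      _ ≤ B := Nat.floor_le (by linarith)
  have h3 := Real.log_le_log (by positivity) h2
  rw [Real.log_pow] at h3
  have := Real.log_two_gt_d9
  have : (0:ℝ) ≤ (Nat.log 2 ⌊B⌋₊ : ℝ) := by positivity
  nlinarith

open Finset in
lemma total_bound : ∃ C : ℝ, 0 < C ∧ ∀ B : ℝ, 3 ≤ B →
    (((Fintype.piFinset (TT ⌊B⌋₊)).biUnion (fun w => (UU ⌊B⌋₊ w).image (gg w))).card : ℝ) ≤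
      C * B^2 * Real.log B ^ 2 := by
  obtain ⟨M, hM, hs⟩ := sum_bound
  refine ⟨256 * M^20 * 9, by positivity, ?_⟩
  intro B hB
  have hpos : ∀ w ∈ Fintype.piFinset (TT ⌊B⌋₊), ∀ i, 0 < w i := by
    intro w hw i
    have := Fintype.mem_piFinset.1 hw i
    unfold TT at this
    split_ifs at this
    · have := (mem_filter.1 this).1
      rw [mem_Icc] at this; omega
    · rw [mem_Icc] at this; omega
  have e1 : ((((Fintype.piFinset (TT ⌊B⌋₊)).biUnion
      (fun w => (UU ⌊B⌋₊ w).image (gg w))).card : ℕ) : ℝ) ≤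
      ∑ w ∈ Fintype.piFinset (TT ⌊B⌋₊), ((UU ⌊B⌋₊ w).card : ℝ) := by
    exact_mod_cast card_biUnion_le.trans (sum_le_sum (fun w _ => card_image_le))
  refine e1.trans ?_
  calc _ ≤ ∑ w ∈ Fintype.piFinset (TT ⌊B⌋₊),
        256 * (B^2 * ∏ i, ff (ee i) (w i)) * ((Nat.log 2 ⌊B⌋₊ : ℝ) + 1)^2 :=
        sum_le_sum (fun w hw => UU_card B _ (by linarith) (Nat.floor_le (by linarith)) w (hpos w hw))
    _ = 256 * (B^2 * ∏ i, ∑ n ∈ TT ⌊B⌋₊ i, ff (ee i) n) * ((Nat.log 2 ⌊B⌋₊ : ℝ) + 1)^2 := by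
        rw [← sum_mul, ← mul_sum, ← mul_sum, prod_univ_sum]
    _ ≤ 256 * (B^2 * ∏ i : Fin 20, M) * (3 * Real.log B)^2 := by
        gcongr with i _
        · exact fun i _ => sum_nonneg (fun n _ => ff_nonneg _ _)
        · exact hs _ _
        · exact log_bound B hB
    _ = _ := by
        simp only [prod_const, card_univ, Fintype.card_fin]; ring


/-- The number of quadruples `(a₀,a₁,a₂,a₃)` of positive integers at
most `B` admitting the factorizations from Propositions 5.2 and 5.3 of the paper
(with `r₀` a power of 3, primes dividing `r₁r₂r₃` less than 17, `bᵢ` arbitrary,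
`u`'s and `v`'s squarefree) is at most `C·B²·(log B)²`. -/
theorem stmt_11 :
    ∃ C : ℝ, 0 < C ∧ ∀ B : ℝ, 3 ≤ B →
      (({t : ℕ × ℕ × ℕ × ℕ |
          0 < t.1 ∧ 0 < t.2.1 ∧ 0 < t.2.2.1 ∧ 0 < t.2.2.2 ∧
          (t.1 : ℝ) ≤ B ∧ (t.2.1 : ℝ) ≤ B ∧ (t.2.2.1 : ℝ) ≤ B ∧ (t.2.2.2 : ℝ) ≤ B ∧
          ∃ r₀ r₁ r₂ r₃ b₀ b₁ b₂ b₃ u01 u02 u03 u12 u13 u23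
            v01 v10 v02 v20 v03 v30 v12 v21 v13 v31 v23 v32 : ℕ,
            0 < r₀ ∧ 0 < r₁ ∧ 0 < r₂ ∧ 0 < r₃ ∧
            0 < b₀ ∧ 0 < b₁ ∧ 0 < b₂ ∧ 0 < b₃ ∧
            Squarefree u01 ∧ Squarefree u02 ∧ Squarefree u03 ∧
            Squarefree u12 ∧ Squarefree u13 ∧ Squarefree u23 ∧
            Squarefree v01 ∧ Squarefree v10 ∧ Squarefree v02 ∧ Squarefree v20 ∧
            Squarefree v03 ∧ Squarefree v30 ∧ Squarefree v12 ∧ Squarefree v21 ∧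
            Squarefree v13 ∧ Squarefree v31 ∧ Squarefree v23 ∧ Squarefree v32 ∧
            t.1 = r₀ * b₀ ^ 3 * u01 * u02 * u03 * v01 * v10 ^ 2 * v02 * v20 ^ 2 *
              v03 * v30 ^ 2 ∧
            t.2.1 = r₁ * b₁ ^ 3 * u01 * u12 * u13 * v10 * v01 ^ 2 * v12 * v21 ^ 2 *
              v13 * v31 ^ 2 ∧
            t.2.2.1 = r₂ * b₂ ^ 3 * u02 * u12 * u23 * v20 * v02 ^ 2 * v21 * v12 ^ 2 *
              v23 * v32 ^ 2 ∧
            t.2.2.2 = r₃ * b₃ ^ 3 * u03 * u13 * u23 * v30 * v03 ^ 2 * v31 * v13 ^ 2 *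
              v32 * v23 ^ 2 ∧
            (∀ p : ℕ, p.Prime → p ∣ r₀ → p = 3) ∧
            (∀ p : ℕ, p.Prime → (p ∣ r₁ ∨ p ∣ r₂ ∨ p ∣ r₃) → p < 17)}.ncard : ℝ)) ≤
        C * B ^ 2 * Real.log B ^ 2 := by
  obtain ⟨C, hC, h⟩ := total_bound
  refine ⟨C, hC, fun B hB => le_trans ?_ (h B hB)⟩
  rw [← Set.ncard_coe_finset]
  refine Nat.cast_le.2 (Set.ncard_le_ncard ?_ (Finset.finite_toSet _))
  rintro ⟨a0, a1, a2, a3⟩ ⟨p0, p1, p2, p3, l0, l1, l2, l3, r₀, r₁, r₂, r₃, b₀, b₁, b₂, b₃,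
    u01, u02, u03, u12, u13, u23, v01, v10, v02, v20, v03, v30, v12, v21, v13, v31, v23, v32,
    hr0, hr1, hr2, hr3, hb0, hb1, hb2, hb3, su01, su02, su03, su12, su13, su23,
    sv01, sv10, sv02, sv20, sv03, sv30, sv12, sv21, sv13, sv31, sv23, sv32,
    E0, E1, E2, E3, P0, P1⟩
  dsimp only at p0 p1 p2 p3 l0 l1 l2 l3 E0 E1 E2 E3
  have l0 := Nat.le_floor l0
  have l1 := Nat.le_floor l1
  have l2 := Nat.le_floor l2
  have l3 := Nat.le_floor l3
  have sm : ∀ r : ℕ, 0 < r → (∀ p : ℕ, p.Prime → p ∣ r → p < 17) → r ∈ Nat.smoothNumbers 17 := by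
    intro r hr hp
    rw [Nat.mem_smoothNumbers']
    intro p pp pd
    exact hp p pp pd
  have mk : ∀ a x : ℕ, 0 < a → a ≤ ⌊B⌋₊ → x ∣ a → x ∈ Finset.Icc 1 ⌊B⌋₊ := by
    intro a x ha hl hd
    rw [Finset.mem_Icc]
    exact ⟨Nat.pos_of_dvd_of_pos hd ha, (Nat.le_of_dvd ha hd).trans hl⟩
  have D0 : ∀ x, x ∣ a0 → x ∈ Finset.Icc 1 ⌊B⌋₊ := fun x => mk a0 x p0 l0
  have D1 : ∀ x, x ∣ a1 → x ∈ Finset.Icc 1 ⌊B⌋₊ := fun x => mk a1 x p1 l1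
  have D2 : ∀ x, x ∣ a2 → x ∈ Finset.Icc 1 ⌊B⌋₊ := fun x => mk a2 x p2 l2
  have D3 : ∀ x, x ∣ a3 → x ∈ Finset.Icc 1 ⌊B⌋₊ := fun x => mk a3 x p3 l3
  rw [Finset.mem_coe, Finset.mem_biUnion]
  refine ⟨![r₀, r₁, r₂, r₃, b₀, b₁, b₂, b₃, v01, v10, v02, v20, v03, v30, v12, v21, v13, v31,
    v23, v32], ?_, ?_⟩
  · rw [Fintype.mem_piFinset]
    intro i
    fin_cases i
    · refine Finset.mem_filter.2 ⟨D0 _ ?_, sm _ hr0 fun p pp pd => by rw [P0 p pp pd]; norm_num⟩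
      rw [E0]; simp [mul_assoc]
    · refine Finset.mem_filter.2 ⟨D1 _ ?_, sm _ hr1 fun p pp pd => P1 p pp (by tauto)⟩
      rw [E1]; simp [mul_assoc]
    · refine Finset.mem_filter.2 ⟨D2 _ ?_, sm _ hr2 fun p pp pd => P1 p pp (by tauto)⟩
      rw [E2]; simp [mul_assoc]
    · refine Finset.mem_filter.2 ⟨D3 _ ?_, sm _ hr3 fun p pp pd => P1 p pp (by tauto)⟩
      rw [E3]; simp [mul_assoc]
    · refine D0 b₀ (E0 ▸ ⟨r₀ * b₀ ^ 2 * u01 * u02 * u03 * v01 * v10 ^ 2 * v02 * v20 ^ 2 *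
              v03 * v30 ^ 2, by ring⟩)
    · refine D1 b₁ (E1 ▸ ⟨r₁ * b₁ ^ 2 * u01 * u12 * u13 * v10 * v01 ^ 2 * v12 * v21 ^ 2 *
              v13 * v31 ^ 2, by ring⟩)
    · refine D2 b₂ (E2 ▸ ⟨r₂ * b₂ ^ 2 * u02 * u12 * u23 * v20 * v02 ^ 2 * v21 * v12 ^ 2 *
              v23 * v32 ^ 2, by ring⟩)
    · refine D3 b₃ (E3 ▸ ⟨r₃ * b₃ ^ 2 * u03 * u13 * u23 * v30 * v03 ^ 2 * v31 * v13 ^ 2 *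
              v32 * v23 ^ 2, by ring⟩)
    · refine D0 v01 (E0 ▸ ?_)
      repeat first | exact dvd_mul_left _ _ | apply Dvd.dvd.mul_right
    · refine D1 v10 (E1 ▸ ?_)
      repeat first | exact dvd_mul_left _ _ | apply Dvd.dvd.mul_right
    · refine D0 v02 (E0 ▸ ?_)
      repeat first | exact dvd_mul_left _ _ | apply Dvd.dvd.mul_right
    · refine D2 v20 (E2 ▸ ?_)
      repeat first | exact dvd_mul_left _ _ | apply Dvd.dvd.mul_right
    · refine D0 v03 (E0 ▸ ?_)
      repeat first | exact dvd_mul_left _ _ | apply Dvd.dvd.mul_right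
    · refine D3 v30 (E3 ▸ ?_)
      repeat first | exact dvd_mul_left _ _ | apply Dvd.dvd.mul_right
    · refine D1 v12 (E1 ▸ ?_)
      repeat first | exact dvd_mul_left _ _ | apply Dvd.dvd.mul_right
    · refine D2 v21 (E2 ▸ ?_)
      repeat first | exact dvd_mul_left _ _ | apply Dvd.dvd.mul_right
    · refine D1 v13 (E1 ▸ ?_)
      repeat first | exact dvd_mul_left _ _ | apply Dvd.dvd.mul_right
    · refine D3 v31 (E3 ▸ ?_)
      repeat first | exact dvd_mul_left _ _ | apply Dvd.dvd.mul_right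
    · refine D2 v23 (E2 ▸ ?_)
      repeat first | exact dvd_mul_left _ _ | apply Dvd.dvd.mul_right
    · refine D3 v32 (E3 ▸ ?_)
      repeat first | exact dvd_mul_left _ _ | apply Dvd.dvd.mul_right
  · rw [Finset.mem_image]
    set w : Fin 20 → ℕ := ![r₀, r₁, r₂, r₃, b₀, b₁, b₂, b₃, v01, v10, v02, v20, v03, v30, v12,
      v21, v13, v31, v23, v32]
    have F0 : cc0 w * (u01 * u02 * u03) = a0 := by
      rw [E0]
      show r₀ * b₀ ^ 3 * v01 * v10 ^ 2 * v02 * v20 ^ 2 * v03 * v30 ^ 2 * (u01 * u02 * u03) = _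
      ring
    have F1 : cc1 w * (u01 * u12 * u13) = a1 := by
      rw [E1]
      show r₁ * b₁ ^ 3 * v10 * v01 ^ 2 * v12 * v21 ^ 2 * v13 * v31 ^ 2 * (u01 * u12 * u13) = _
      ring
    have F2 : cc2 w * (u02 * u12 * u23) = a2 := by
      rw [E2]
      show r₂ * b₂ ^ 3 * v20 * v02 ^ 2 * v21 * v12 ^ 2 * v23 * v32 ^ 2 * (u02 * u12 * u23) = _
      ring
    have F3 : cc3 w * (u03 * u13 * u23) = a3 := by
      rw [E3]
      show r₃ * b₃ ^ 3 * v30 * v03 ^ 2 * v31 * v13 ^ 2 * v32 * v23 ^ 2 * (u03 * u13 * u23) = _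
      ring
    refine ⟨(u01, u02, u03, u12, u13, u23), ?_, ?_⟩
    · refine Finset.mem_filter.2 ⟨?_, F0.trans_le l0, F1.trans_le l1, F2.trans_le l2,
        F3.trans_le l3⟩
      simp only [Finset.mem_product]
      refine ⟨D0 u01 (E0 ▸ ?_), D0 u02 (E0 ▸ ?_), D0 u03 (E0 ▸ ?_), D1 u12 (E1 ▸ ?_),
        D1 u13 (E1 ▸ ?_), D2 u23 (E2 ▸ ?_)⟩
      all_goals repeat first | exact dvd_mul_left _ _ | apply Dvd.dvd.mul_right
    · simp only [gg, F0, F1, F2, F3]
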